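/- arXiv:0704.1730 — 2 statements merged into one kernel-verified Lean document; each statement's English description precedes it below -/
import Mathlib

section
/- Let p and q be primes with p > q > 2 and q dividing p − 1, let r be an integer with r^q ≡ 1 (mod p) and r ≢ 1 (mod p), and let G be a group of order pq generated by a, b where a has order p, b has order q and b⁻¹ab = a^r. Put α = b, β = ab, γ = b⁻¹a⁻¹b⁻¹, and let (T°, T⋆) be the latin bitrade with T° = {(g⟨α⟩, g⟨β⟩, g⟨γ⟩) : g ∈ G} and T⋆ = {(g⟨α⟩, g⟨β⟩, gα⁻¹⟨γ⟩) : g ∈ G}. Let u denote the unit r mod p of ℤ/pℤ. Then (T°, T⋆) is thin if and only if for all integers i and j, the equation u^j + u^{j−1} = u^{i+j−1} + 1 in ℤ/pℤ holds exactly when either i ≡ 0 (mod q) and j ≡ 0 (mod q), or i ≡ 1 (mod q) and j ≡ 1 (mod q). -/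
/-!
Every element involved is written as `a ^ x * b ^ k` with `x : ZMod p`, and
`b ^ k * a ^ x = a ^ (u ^ (-k) * x) * b ^ k`. With `c = u / (u - 1)` and `d = u / (u² - 1)` the
elements `β = ab` and `γ = b⁻¹a⁻¹b⁻¹` are the conjugates `a ^ c * b * a ^ (-c)` and
`a ^ d * b⁻² * a ^ (-d)` (in the affine group of `ZMod p`, `c` and `d` are their fixed points), so
all powers of `β` and `γ` are explicit. This gives `zpow_eq_iff`: `b ^ s = γ ^ m * β ^ t` holds iff
`t ≡ s + 2m (mod q)` and `u ^ (1 - s) + u ^ (-s) = u ^ (2m + 1) + 1`.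

Unfolding cosets (`isThin_iff`), thinness says that `b ^ s = γ ^ m * β ^ t` with `γ ^ m` outside
`⟨b⟩` and `⟨β⟩` forces `b ^ (s - 1) ∈ ⟨γ⟩`. By `zpow_eq_iff` again, the hypothesis on `γ ^ m`
means `q ∤ m` and the conclusion means `q ∣ s - 1`. The substitution `j = 1 - s`, `i = 2m + 1 + s`
turns the equation into that of the theorem, the solutions with `q ∣ m`, that is
`i + j ≡ 2 (mod q)`, being exactly `i ≡ j ≡ 1 (mod q)`, because `u ≠ -1`.
-/

section LatinDefs

variable {A₁ A₂ A₃ : Type*}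

/-- A partial latin square: two triples agreeing in at least two coordinates are equal
(i.e. two distinct triples agree in at most one coordinate). -/
def IsPLS (T : Set (A₁ × A₂ × A₃)) : Prop :=
  ∀ t ∈ T, ∀ t' ∈ T,
    ((t.1 = t'.1 ∧ t.2.1 = t'.2.1) → t = t') ∧
    ((t.1 = t'.1 ∧ t.2.2 = t'.2.2) → t = t') ∧
    ((t.2.1 = t'.2.1 ∧ t.2.2 = t'.2.2) → t = t')

/-- Conditions (R2)/(R3): for each triple of `T` and each pair of coordinates there is a
unique triple of `T'` agreeing with it in those two coordinates. -/
def BitradeCond (T T' : Set (A₁ × A₂ × A₃)) : Prop :=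
  ∀ t ∈ T,
    (∃! t', t' ∈ T' ∧ t'.1 = t.1 ∧ t'.2.1 = t.2.1) ∧
    (∃! t', t' ∈ T' ∧ t'.1 = t.1 ∧ t'.2.2 = t.2.2) ∧
    (∃! t', t' ∈ T' ∧ t'.2.1 = t.2.1 ∧ t'.2.2 = t.2.2)

/-- A latin bitrade: a pair of disjoint nonempty partial latin squares satisfying
(R1), (R2), (R3). -/
def IsBitrade (T T' : Set (A₁ × A₂ × A₃)) : Prop :=
  T.Nonempty ∧ T'.Nonempty ∧ IsPLS T ∧ IsPLS T' ∧ Disjoint T T' ∧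
  BitradeCond T T' ∧ BitradeCond T' T

/-- A latin bitrade is primary if its only sub-bitrade is itself. -/
def IsPrimary (T T' : Set (A₁ × A₂ × A₃)) : Prop :=
  ∀ U U' : Set (A₁ × A₂ × A₃), IsBitrade U U' → U ⊆ T → U' ⊆ T' → U = T ∧ U' = T'

/-- A latin trade `T` is minimal if any latin trade contained in it equals it. -/
def IsMinimalTrade (T : Set (A₁ × A₂ × A₃)) : Prop :=
  ∀ U U' : Set (A₁ × A₂ × A₃), IsBitrade U U' → U ⊆ T → U = T

/-- Thinness: if `i ∘ j = i' ∘ j'` with `i ≠ i'`, `j ≠ j'`, then `i ⋆ j'` is undefined or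
equals `i ∘ j`. -/
def IsThin (T T' : Set (A₁ × A₂ × A₃)) : Prop :=
  ∀ i i' j j' k, (i, j, k) ∈ T → (i', j', k) ∈ T → i ≠ i' → j ≠ j' →
    ∀ k', (i, j', k') ∈ T' → k' = k

/-- Orthogonality: if `i ∘ j = i' ∘ j'` with `i ≠ i'`, `j ≠ j'`, and both `i ⋆ j`,
`i' ⋆ j'` are defined, then `i ⋆ j ≠ i' ⋆ j'`. -/
def IsOrthogonal (T T' : Set (A₁ × A₂ × A₃)) : Prop :=
  ∀ i i' j j' k, (i, j, k) ∈ T → (i', j', k) ∈ T → i ≠ i' → j ≠ j' →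
    ∀ k₁ k₂, (i, j, k₁) ∈ T' → (i', j', k₂) ∈ T' → k₁ ≠ k₂

/-- `k`-homogeneity: every occurring row, column and symbol appears in exactly `k` triples. -/
def IsHomogeneous (T : Set (A₁ × A₂ × A₃)) (k : ℕ) : Prop :=
  (∀ i, (∃ t ∈ T, t.1 = i) → {t ∈ T | t.1 = i}.ncard = k) ∧
  (∀ j, (∃ t ∈ T, t.2.1 = j) → {t ∈ T | t.2.1 = j}.ncard = k) ∧
  (∀ s, (∃ t ∈ T, t.2.2 = s) → {t ∈ T | t.2.2 = s}.ncard = k)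

end LatinDefs

/-- The latin trade `T° = {(gA, gB, gC) : g ∈ G}` built from a group `G` and elements
`a`, `b`, `c`, where `A = ⟨a⟩`, `B = ⟨b⟩`, `C = ⟨c⟩` and `gH` denotes a left coset. -/
def Tcirc (G : Type*) [Group G] (a b c : G) :
    Set ((G ⧸ Subgroup.zpowers a) × (G ⧸ Subgroup.zpowers b) × (G ⧸ Subgroup.zpowers c)) :=
  {t | ∃ g : G, t = (QuotientGroup.mk g, QuotientGroup.mk g, QuotientGroup.mk g)}

/-- The disjoint mate `T⋆ = {(gA, gB, ga⁻¹C) : g ∈ G}`. -/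
def Tstar (G : Type*) [Group G] (a b c : G) :
    Set ((G ⧸ Subgroup.zpowers a) × (G ⧸ Subgroup.zpowers b) × (G ⧸ Subgroup.zpowers c)) :=
  {t | ∃ g : G, t = (QuotientGroup.mk g, QuotientGroup.mk g, QuotientGroup.mk (g * a⁻¹))}

/-- Thinness of the bitrade of a group, translated from cosets to elements: with `i = g⟨α⟩`,
`j = g⟨β⟩`, `i' = gγᵐ⟨α⟩` and `j' = gγᵐ⟨β⟩`, an entry in cell `(i, j')` of `T⋆` comes from
`gαˢ = gγᵐβᵗ`. -/
lemma isThin_iff {G : Type*} [Group G] (α β γ : G) :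
    IsThin (Tcirc G α β γ) (Tstar G α β γ) ↔
      ∀ m s t : ℤ, α ^ s = γ ^ m * β ^ t → γ ^ m ∉ Subgroup.zpowers α →
        γ ^ m ∉ Subgroup.zpowers β → α ^ (s - 1) ∈ Subgroup.zpowers γ := by
  constructor
  · intro h m s t hst h1 h2
    have := h (QuotientGroup.mk 1) (QuotientGroup.mk (γ ^ m)) (QuotientGroup.mk 1)
      (QuotientGroup.mk (γ ^ m)) (QuotientGroup.mk 1) ⟨1, rfl⟩
      ⟨γ ^ m, by
        simp only [Prod.mk.injEq, true_and]
        rw [QuotientGroup.eq]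
        simp⟩
      (by rw [Ne, QuotientGroup.eq]; simpa using h1)
      (by rw [Ne, QuotientGroup.eq]; simpa using h2)
      (QuotientGroup.mk (α ^ s * α⁻¹))
      ⟨α ^ s, by
        simp only [Prod.mk.injEq, and_true]
        refine ⟨?_, ?_⟩
        · rw [QuotientGroup.eq]
          simp
        · rw [QuotientGroup.eq, hst]
          simp⟩
    rw [eq_comm, QuotientGroup.eq] at this
    simpa [zpow_sub_one] using this
  · rintro h i i' j j' k ⟨g, hg⟩ ⟨g', hg'⟩ hi hj k' ⟨x, hx⟩
    simp only [Prod.mk.injEq] at hg hg' hx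
    obtain ⟨rfl, rfl, rfl⟩ := hg
    obtain ⟨rfl, rfl, hk⟩ := hg'
    obtain ⟨h1, h2, rfl⟩ := hx
    rw [QuotientGroup.eq] at h1 h2 hk
    obtain ⟨s, hs⟩ := Subgroup.mem_zpowers_iff.1 h1
    obtain ⟨t, ht⟩ := Subgroup.mem_zpowers_iff.1 h2
    obtain ⟨m, hm⟩ := Subgroup.mem_zpowers_iff.1 hk
    rw [Ne, QuotientGroup.eq] at hi hj
    have := h m s t (by rw [hs, ht, hm]; group) (by rwa [hm]) (by rwa [hm])
    rw [eq_comm, QuotientGroup.eq]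
    rw [zpow_sub_one, hs] at this
    simpa [mul_assoc] using this

/-- Exponentiation `A x = a ^ x` for `x : ZMod p`, where `a` has order `p`. The normal form
`A x * b ^ k` is unique because `p` and `q` are coprime, so that `⟨a⟩ ∩ ⟨b⟩ = 1`. -/
lemma exists_exp {G : Type*} [Group G] (p q : ℕ) (hp : p.Prime) (hq : q.Prime) (hqp : q < p)
    (r : ℤ) (a b : G) (hoa : orderOf a = p) (hob : orderOf b = q)
    (hrel : b⁻¹ * a * b = a ^ r) (u : (ZMod p)ˣ) (hu : (u : ZMod p) = (r : ZMod p)) :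
    ∃ A : ZMod p → G, (∀ x y, A (x + y) = A x * A y) ∧ A 1 = a ∧
      (∀ (x : ZMod p) (k l : ℤ), A x * b ^ k = b ^ l ↔ x = 0 ∧ (q : ℤ) ∣ k - l) ∧
      (∀ (k : ℤ) (x : ZMod p), b ^ k * A x = A (((u ^ (-k) : (ZMod p)ˣ) : ZMod p) * x) * b ^ k) := by
  have : NeZero p := ⟨hp.ne_zero⟩
  have hA : ∀ n : ℤ, a ^ (((n : ZMod p).val : ℕ) : ℤ) = a ^ n := by
    intro n
    rw [zpow_eq_zpow_iff_modEq, hoa, ← ZMod.intCast_eq_intCast_iff]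
    simp
  have hadd : ∀ x y : ZMod p, a ^ (((x + y).val : ℕ) : ℤ) =
      a ^ ((x.val : ℕ) : ℤ) * a ^ ((y.val : ℕ) : ℤ) := by
    intro x y
    obtain ⟨m, rfl⟩ := ZMod.intCast_surjective x
    obtain ⟨n, rfl⟩ := ZMod.intCast_surjective y
    rw [← Int.cast_add, hA, hA, hA, zpow_add]
  have hconj : ∀ x : ZMod p, b⁻¹ * a ^ ((x.val : ℕ) : ℤ) * b =
      a ^ ((((u : ZMod p) * x).val : ℕ) : ℤ) := by
    intro x
    obtain ⟨n, rfl⟩ := ZMod.intCast_surjective x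
    rw [hu, ← Int.cast_mul, hA, hA, zpow_mul, ← hrel]
    have := conj_zpow (i := n) (a := b⁻¹) (b := a)
    rw [inv_inv] at this
    exact this.symm
  refine ⟨fun x => a ^ ((x.val : ℕ) : ℤ), hadd, by simpa using hA 1, ?_, ?_⟩
  · intro x k l
    obtain ⟨n, rfl⟩ := ZMod.intCast_surjective x
    simp only [hA]
    have key : b ^ (k - l) = 1 ↔ (q : ℤ) ∣ k - l := by
      rw [← hob, orderOf_dvd_iff_zpow_eq_one]
    have key2 : a ^ n = 1 ↔ (n : ZMod p) = 0 := by
      rw [ZMod.intCast_zmod_eq_zero_iff_dvd, ← orderOf_dvd_iff_zpow_eq_one, hoa]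
    rw [← key, ← key2]
    constructor
    · intro h
      have h1 : a ^ n = b ^ (l - k) := by rw [zpow_sub, ← h]; group
      have hcop : Nat.Coprime (orderOf a) (orderOf b) := by
        rw [hoa, hob]
        exact (Nat.coprime_primes hp hq).2 hqp.ne'
      have h2 : a ^ n = 1 := by
        rw [← orderOf_eq_one_iff]
        refine Nat.eq_one_of_dvd_coprimes hcop ?_ ?_
        · exact orderOf_dvd_of_mem_zpowers ⟨n, rfl⟩
        · exact orderOf_dvd_of_mem_zpowers ⟨l - k, h1.symm⟩
      refine ⟨h2, ?_⟩
      rw [h2, one_mul] at h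
      rw [zpow_sub, h, mul_inv_cancel]
    · rintro ⟨h1, h2⟩
      rw [h1, one_mul]
      rwa [zpow_sub, mul_inv_eq_one] at h2
  · have hinv : ∀ x : ZMod p, b * a ^ ((x.val : ℕ) : ℤ) =
        a ^ (((((u⁻¹ : (ZMod p)ˣ) : ZMod p) * x).val : ℕ) : ℤ) * b := by
      intro x
      have := hconj (((u⁻¹ : (ZMod p)ˣ) : ZMod p) * x)
      rw [Units.mul_inv_cancel_left] at this
      rw [← this]
      group
    intro k
    induction k with
    | zero => simp
    | succ k ih =>
      intro x
      have e : -((k : ℤ) + 1) = -k + -1 := by ring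
      rw [zpow_add_one, mul_assoc, hinv, ← mul_assoc, ih, e, zpow_add, zpow_neg_one, mul_assoc,
        Units.val_mul, mul_assoc]
    | pred k ih =>
      intro x
      have e : -(-(k : ℤ) - 1) = - -(k : ℤ) + 1 := by ring
      have h1 : b⁻¹ * a ^ ((x.val : ℕ) : ℤ) = a ^ ((((u : ZMod p) * x).val : ℕ) : ℤ) * b⁻¹ := by
        rw [← hconj]
        group
      rw [zpow_sub_one, mul_assoc, h1, ← mul_assoc, ih, e, zpow_add_one, mul_assoc, Units.val_mul,
        mul_assoc]

/-- The criterion for an element of `⟨b⟩` to lie in `⟨γ⟩⟨β⟩`, with the exponents. -/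
lemma zpow_eq_iff {G : Type*} [Group G] (p q : ℕ) [Fact p.Prime] (hp : p.Prime) (hq : q.Prime)
    (hqp : q < p) (r : ℤ) (a b : G) (hoa : orderOf a = p) (hob : orderOf b = q)
    (hrel : b⁻¹ * a * b = a ^ r) (u : (ZMod p)ˣ) (hu : (u : ZMod p) = (r : ZMod p))
    (hu2 : (u : ZMod p) - 1 ≠ 0) (hu3 : (u : ZMod p) + 1 ≠ 0) (huq : u ^ q = 1) (m s t : ℤ) :
    b ^ s = (b⁻¹ * a⁻¹ * b⁻¹) ^ m * (a * b) ^ t ↔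
      (u : ZMod p) ^ (1 - s) + (u : ZMod p) ^ (-s) = (u : ZMod p) ^ (2 * m + 1) + 1 ∧
        (q : ℤ) ∣ t - 2 * m - s := by
  obtain ⟨A, hadd, hA1, hAb, hcomm⟩ := exists_exp p q hp hq hqp r a b hoa hob hrel u hu
  set U : ZMod p := (u : ZMod p) with hU
  have hU0 : U ≠ 0 := u.ne_zero
  have hU2 : U ^ 2 - 1 ≠ 0 := by
    have : U ^ 2 - 1 = (U - 1) * (U + 1) := by ring
    rw [this]
    exact mul_ne_zero hu2 hu3
  replace hcomm : ∀ (k : ℤ) (x : ZMod p), b ^ k * A x = A (U ^ (-k) * x) * b ^ k := by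
    intro k x
    rw [hcomm, Units.val_zpow_eq_zpow_val]
  have hA0 : A 0 = 1 := by simpa using hadd 0 0
  have hneg : ∀ x, (A x)⁻¹ = A (-x) := by
    intro x
    rw [inv_eq_iff_mul_eq_one, ← hadd, add_neg_cancel, hA0]
  -- a conjugate of `b ^ k` by `A x`, in normal form
  have hconj : ∀ (k : ℤ) (x : ZMod p), A x * b ^ k * (A x)⁻¹ = A (x - U ^ (-k) * x) * b ^ k := by
    intro k x
    rw [hneg, mul_assoc, hcomm, ← mul_assoc, ← hadd]
    congr 2
    ring
  have hβ : a * b = A (U / (U - 1)) * b ^ (1 : ℤ) * (A (U / (U - 1)))⁻¹ := by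
    have e : U / (U - 1) - U ^ (-1 : ℤ) * (U / (U - 1)) = 1 := by
      rw [zpow_neg_one]
      field_simp
    rw [hconj, e, hA1, zpow_one]
  have hγ : b⁻¹ * a⁻¹ * b⁻¹ =
      A (U / (U ^ 2 - 1)) * b ^ (-2 : ℤ) * (A (U / (U ^ 2 - 1)))⁻¹ := by
    have e : U / (U ^ 2 - 1) - U ^ (-(-2) : ℤ) * (U / (U ^ 2 - 1)) = U ^ (-(-1) : ℤ) * (-1) := by
      have : U ^ (-(-2) : ℤ) = U ^ 2 := by
        rw [neg_neg]
        norm_cast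
      rw [this]
      simp only [neg_neg, zpow_one]
      field_simp
      ring
    rw [hconj, e]
    have e2 : b ^ (-2 : ℤ) = b ^ (-1 : ℤ) * b ^ (-1 : ℤ) := by rw [← zpow_add]; norm_num
    rw [e2, ← mul_assoc, ← hcomm, ← hneg, hA1, zpow_neg_one]
  rw [hβ, hγ, conj_zpow, conj_zpow, ← zpow_mul, ← zpow_mul, hconj, hconj, mul_assoc,
    ← mul_assoc (b ^ _) (A _), hcomm, mul_assoc, ← zpow_add, ← mul_assoc, ← hadd, eq_comm, hAb]
  have e1 : (-2 * m + 1 * t - s) = t - 2 * m - s := by ring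
  rw [e1]
  refine and_congr_left fun hd => ?_
  -- the exponent of `U` can be reduced modulo `q`
  have ht : U ^ (t - 2 * m) = U ^ s := by
    obtain ⟨w, hw⟩ := hd
    have : t - 2 * m = s + q * w := by linarith
    rw [this, hU, ← Units.val_zpow_eq_zpow_val, ← Units.val_zpow_eq_zpow_val, zpow_add, zpow_mul,
      zpow_natCast, huq, one_zpow, mul_one]
  have hz : U ^ (-(1 * t)) = U ^ (-s) * U ^ (-(2 * m)) := by
    have : -(1 * t) = -(t - 2 * m) + -(2 * m) := by ring
    rw [this, zpow_add₀ hU0, zpow_neg, ht, zpow_neg _ s]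
  have hm : U ^ (-(-2 * m)) = U ^ (2 * m) := by
    congr 1
    ring
  have hs : U ^ (1 - s) = U * U ^ (-s) := by
    rw [sub_eq_add_neg, zpow_add₀ hU0, zpow_one]
  have hmm : U ^ (2 * m) * U ^ (-(2 * m)) = 1 := by
    rw [← zpow_add₀ hU0, add_neg_cancel, zpow_zero]
  rw [hz, hm, hs, zpow_add₀ hU0, zpow_one]
  generalize U ^ (2 * m) = X at *
  generalize U ^ (-(2 * m)) = Y at *
  generalize U ^ (-s) = Z at *
  have hfac : U / (U ^ 2 - 1) - X * (U / (U ^ 2 - 1)) + X * (U / (U - 1) - Z * Y * (U / (U - 1)))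
      = (U / (U ^ 2 - 1)) * (X * U + 1 - (U * Z + Z)) := by
    have h1 : U / (U - 1) = (U / (U ^ 2 - 1)) * (U + 1) := by
      field_simp
      ring
    rw [h1]
    linear_combination (-(U / (U ^ 2 - 1)) * (U + 1) * Z) * hmm
  rw [hfac, mul_eq_zero, or_iff_right (div_ne_zero hU0 hU2), sub_eq_zero, eq_comm]

/-- For the nonabelian group of order `pq`, with `u` the unit `r mod p` of `ZMod p`, the
associated latin bitrade is thin if and only if the solutions of
`uʲ + uʲ⁻¹ = u^(i+j−1) + 1` in `ZMod p` are exactly `i ≡ j ≡ 0 (mod q)` and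
`i ≡ j ≡ 1 (mod q)`. -/
theorem statement16 {G : Type*} [Group G] (p q : ℕ) (hp : p.Prime) (hq : q.Prime)
    (hqp : q < p) (h2q : 2 < q) (hdvd : q ∣ p - 1)
    (r : ℤ) (hr1 : r ^ q ≡ 1 [ZMOD (p : ℤ)]) (hr2 : ¬ r ≡ 1 [ZMOD (p : ℤ)])
    (hcard : Nat.card G = p * q)
    (a b : G) (hoa : orderOf a = p) (hob : orderOf b = q)
    (hrel : b⁻¹ * a * b = a ^ r)
    (hgen : Subgroup.closure {a, b} = ⊤)
    (u : (ZMod p)ˣ) (hu : (u : ZMod p) = (r : ZMod p)) :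
    IsThin (Tcirc G b (a * b) (b⁻¹ * a⁻¹ * b⁻¹)) (Tstar G b (a * b) (b⁻¹ * a⁻¹ * b⁻¹)) ↔
      ∀ i j : ℤ,
        (((u ^ j : (ZMod p)ˣ) : ZMod p) + ((u ^ (j - 1) : (ZMod p)ˣ) : ZMod p) =
            ((u ^ (i + j - 1) : (ZMod p)ˣ) : ZMod p) + 1) ↔
          (((q : ℤ) ∣ i ∧ (q : ℤ) ∣ j) ∨ ((q : ℤ) ∣ (i - 1) ∧ (q : ℤ) ∣ (j - 1))) := by

  have : Fact p.Prime := ⟨hp⟩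
  have hU0 : (u : ZMod p) ≠ 0 := u.ne_zero
  have huq : u ^ q = 1 := by
    ext
    rw [Units.val_pow_eq_pow_val, hu]
    have := (ZMod.intCast_eq_intCast_iff _ _ _).2 hr1
    push_cast at this
    simpa using this
  have hu1 : u ≠ 1 := by
    rintro rfl
    apply hr2
    rw [← ZMod.intCast_eq_intCast_iff]
    simpa using hu.symm
  have hord : orderOf u = q := by
    have : Fact q.Prime := ⟨hq⟩
    exact orderOf_eq_prime huq hu1
  have hone : ∀ n : ℤ, (u : ZMod p) ^ n = 1 ↔ (q : ℤ) ∣ n := by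
    intro n
    rw [← hord, orderOf_dvd_iff_zpow_eq_one, ← Units.val_zpow_eq_zpow_val, Units.val_eq_one]
  have hqZ : Prime (q : ℤ) := Nat.prime_iff_prime_int.1 hq
  have hq2 : ¬ (q : ℤ) ∣ 2 := by
    intro h
    have := Int.le_of_dvd (by norm_num) h
    omega
  have hu2 : (u : ZMod p) - 1 ≠ 0 := by
    rw [sub_ne_zero]
    exact fun h => hu1 (Units.val_eq_one.1 h)
  have hu3 : (u : ZMod p) + 1 ≠ 0 := by
    intro h
    refine hq2 ((hone 2).1 ?_)
    rw [eq_neg_of_add_eq_zero_left h]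
    norm_num
  have key := zpow_eq_iff p q hp hq hqp r a b hoa hob hrel u hu hu2 hu3 huq
  set γ := b⁻¹ * a⁻¹ * b⁻¹ with hγ
  -- powers of `γ` and `b`, as special cases of `key`
  have hbγ : ∀ m s : ℤ, b ^ s = γ ^ m ↔ (q : ℤ) ∣ s ∧ (q : ℤ) ∣ m := by
    intro m s
    have hk := key m s 0
    rw [zpow_zero, mul_one] at hk
    rw [hk]
    constructor
    · rintro ⟨h1, h2⟩
      have h3 : (u : ZMod p) ^ (-s) = (u : ZMod p) ^ (2 * m) := by
        have h4 : -s = 2 * m + (0 - 2 * m - s) := by ring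
        rw [h4, zpow_add₀ hU0, (hone _).2 h2, mul_one]
      have h5 : (u : ZMod p) ^ (-s) = 1 := by
        rw [sub_eq_add_neg, zpow_add₀ hU0, zpow_add₀ hU0, zpow_one, ← h3] at h1
        linear_combination h1
      have h6 := (hone _).1 h5
      have h7 := (hone _).1 (h3 ▸ h5)
      exact ⟨(dvd_neg.1 h6), (hqZ.dvd_or_dvd h7).resolve_left hq2⟩
    · rintro ⟨h1, h2⟩
      refine ⟨?_, ?_⟩
      · rw [sub_eq_add_neg, zpow_add₀ hU0, zpow_add₀ hU0, (hone (-s)).2 (dvd_neg.2 h1),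
          (hone (2 * m)).2 (h2.mul_left 2)]
        ring
      · exact ((dvd_zero _).sub (h2.mul_left 2)).sub h1
  have hγb : ∀ m : ℤ, γ ^ m ∈ Subgroup.zpowers b ↔ (q : ℤ) ∣ m := by
    intro m
    rw [Subgroup.mem_zpowers_iff]
    simp only [hbγ]
    exact ⟨fun ⟨_, h⟩ => h.2, fun h => ⟨0, dvd_zero _, h⟩⟩
  have hbg : ∀ s : ℤ, b ^ s ∈ Subgroup.zpowers γ ↔ (q : ℤ) ∣ s := by
    intro s
    rw [Subgroup.mem_zpowers_iff]
    simp only [eq_comm (b := b ^ s), hbγ]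
    exact ⟨fun ⟨_, h⟩ => h.1, fun h => ⟨0, h, dvd_zero _⟩⟩
  have hγβ : ∀ m : ℤ, γ ^ m ∈ Subgroup.zpowers (a * b) → (q : ℤ) ∣ m := by
    intro m h
    obtain ⟨t, ht⟩ := Subgroup.mem_zpowers_iff.1 h
    obtain ⟨h1, -⟩ := (key m 0 (-t)).1 (by rw [zpow_neg, ht]; simp)
    have h2 : (u : ZMod p) ^ (2 * m) = 1 := by
      rw [zpow_add₀ hU0] at h1
      simp only [sub_zero, zpow_one, neg_zero, zpow_zero] at h1
      refine mul_right_cancel₀ hU0 ?_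
      linear_combination -h1
    exact (hqZ.dvd_or_dvd ((hone _).1 h2)).resolve_left hq2
  rw [isThin_iff]
  simp only [Units.val_zpow_eq_zpow_val, hγb, hbg]
  constructor
  · intro h i j
    constructor
    · intro hij
      by_cases hm : (q : ℤ) ∣ i + j - 2
      · -- here the equation reads `u ^ (j - 1) * (u + 1) = u + 1`
        right
        have h1 : (u : ZMod p) ^ (i + j - 1) = u := by
          have e : i + j - 1 = (i + j - 2) + 1 := by ring
          rw [e, zpow_add₀ hU0, (hone _).2 hm, zpow_one, one_mul]
        have h2 : (u : ZMod p) ^ j = (u : ZMod p) ^ (j - 1) * u := by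
          rw [← zpow_add_one₀ hU0, sub_add_cancel]
        have h3 : (q : ℤ) ∣ j - 1 := by
          rw [← hone]
          refine mul_right_cancel₀ hu3 ?_
          rw [h1, h2] at hij
          linear_combination hij
        refine ⟨?_, h3⟩
        have e : i - 1 = (i + j - 2) - (j - 1) := by ring
        rw [e]
        exact hm.sub h3
      · left
        -- `m` solves `2 * m ≡ i + j - 2 (mod q)`, the inverse of `2` being `(q + 1) / 2`
        obtain ⟨w, hw⟩ := hq.odd_of_ne_two h2q.ne'
        have hm2 : (q : ℤ) ∣ 2 * ((w + 1) * (i + j - 2)) - (i + j - 2) :=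
          ⟨i + j - 2, by rw [hw]; push_cast; ring⟩
        set m : ℤ := (w + 1) * (i + j - 2) with hmdef
        have hqm : ¬ (q : ℤ) ∣ m := fun h' => hm ((dvd_sub_right (h'.mul_left 2)).1 hm2)
        have hj : (q : ℤ) ∣ j := by
          have h1 := h m (1 - j) (1 - j + 2 * m) ((key _ _ _).2 ⟨?_, by simp⟩) hqm
            (fun h' => hqm (hγβ m h'))
          · have e : 1 - j - 1 = -j := by ring
            rw [e] at h1
            exact dvd_neg.1 h1
          · have e1 : 1 - (1 - j) = j := by ring
            have e2 : -(1 - j) = j - 1 := by ring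
            have e3 : 2 * m + 1 = (2 * m - (i + j - 2)) + (i + j - 1) := by ring
            rw [e1, e2, e3, zpow_add₀ hU0, (hone _).2 hm2, one_mul, hij]
        refine ⟨?_, hj⟩
        have e : i + j - 1 = i + (j - 1) := by ring
        rw [e, zpow_add₀ hU0, (hone j).2 hj] at hij
        rw [← hone]
        refine mul_right_cancel₀ (zpow_ne_zero (j - 1) hU0) ?_
        linear_combination -hij
    · rintro (⟨hi, hj⟩ | ⟨hi, hj⟩)
      · have e : i + j - 1 = i + (j - 1) := by ring
        rw [e, zpow_add₀ hU0, (hone i).2 hi, (hone j).2 hj]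
        ring
      · have e : i + j - 1 = (i - 1) + j := by ring
        rw [e, zpow_add₀ hU0, (hone (i - 1)).2 hi, (hone (j - 1)).2 hj]
        ring
  · intro h m s t hst hm _
    obtain ⟨h1, -⟩ := (key m s t).1 hst
    have h2 := (h (2 * m + 1 + s) (1 - s)).1 (by
      have e1 : 1 - s - 1 = -s := by ring
      have e2 : 2 * m + 1 + s + (1 - s) - 1 = 2 * m + 1 := by ring
      rw [e1, e2, h1])
    rcases h2 with ⟨-, h3⟩ | ⟨h3, h4⟩
    · rwa [dvd_sub_comm]
    · refine absurd ((hqZ.dvd_or_dvd (?_ : (q : ℤ) ∣ 2 * m)).resolve_left hq2) hm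
      have e : 2 * m = (2 * m + 1 + s - 1) + (1 - s - 1) := by ring
      rw [e]
      exact h3.add h4
end

section
/- For every odd integer k ≥ 3 there exists a latin bitrade (T°, T⋆) such that T° is k-homogeneous and T° is a minimal latin trade. -/
/-- The triples `(t, t + w i, t + w i * f)` with `t ∈ D`, encoded in `ℕ` through `φ`. -/
def triangleSet {k : ℕ} {R : Type*} [CommRing R] (φ : R → ℕ) (w : ZMod k → R) (f : R)
    (D : Ideal R) : Set (ℕ × ℕ × ℕ) :=
  {p | ∃ t ∈ D, ∃ i, p = (φ t, φ (t + w i), φ (t + w i * f))}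

/-- The algebraic data behind the construction: `w` is a homomorphism from `ℤ/k` to the
multiplicative monoid of `R` whose values are independent as far as sums of two of them are
concerned, and `f = w 1 / (1 + w 1)`. The ideal `D` contains all differences of values of `w`. -/
structure IsFrame {k : ℕ} {R : Type*} [CommRing R] (w : ZMod k → R) (f : R) (D : Ideal R) :
    Prop where
  add : ∀ i j, w (i + j) = w i * w j
  zero : w 0 = 1
  frac : (1 + w 1) * f = w 1
  indep : ∀ a b c d, w a + w b = w c + w d → (a = c ∧ b = d) ∨ (a = d ∧ b = c)
  sub_mem : ∀ i j, w i - w j ∈ D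

namespace IsFrame

variable {k : ℕ} {R : Type*} [CommRing R] {w : ZMod k → R} {f : R} {D : Ideal R} {φ : R → ℕ}

lemma inj (h : IsFrame w f D) {a c : ZMod k} (e : w a = w c) : a = c := by
  rcases h.indep a a c a (by rw [e]) with h | h
  · exact h.1
  · exact h.2

lemma inv (h : IsFrame w f D) : w 1 * w (-1) = 1 := by
  rw [← h.add, add_neg_cancel, h.zero]

/-- Multiplication by `f` can be cancelled, because `(1 + w 1) * f = w 1` is a unit. -/
lemma inj_mul (h : IsFrame w f D) {a c : ZMod k} (e : w a * f = w c * f) : a = c := by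
  apply h.inj
  linear_combination (w (-1) * (1 + w 1)) * e - (w a - w c) * h.inv
    - (w a - w c) * w (-1) * h.frac

/-- Multiplication by `1 - f` can be cancelled, because `(1 + w 1) * (1 - f) = 1`. -/
lemma inj_mul' (h : IsFrame w f D) {a c : ZMod k} (e : w a * (1 - f) = w c * (1 - f)) :
    a = c := by
  apply h.inj
  linear_combination (1 + w 1) * e + (w a - w c) * h.frac

/-- Inverting the generator replaces `f` by `1 - f`. -/
lemma reverse (h : IsFrame w f D) : IsFrame (fun i => w (-i)) (1 - f) D where
  add i j := by rw [neg_add, h.add]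
  zero := by rw [neg_zero, h.zero]
  frac := by linear_combination (-w (-1)) * h.frac + (f - 1) * h.inv
  indep a b c d e := by simpa using h.indep _ _ _ _ e
  sub_mem i j := h.sub_mem _ _

lemma isPLS (h : IsFrame w f D) (hφ : φ.Injective) : IsPLS (triangleSet φ w f D) := by
  rintro _ ⟨t, ht, i, rfl⟩ _ ⟨t', ht', i', rfl⟩
  refine ⟨?_, ?_, ?_⟩ <;> rintro ⟨e₁, e₂⟩ <;> replace e₁ := hφ e₁ <;> replace e₂ := hφ e₂
  · subst e₁
    rw [h.inj (add_left_cancel e₂)]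
  · subst e₁
    rw [h.inj_mul (add_left_cancel e₂)]
  · obtain rfl : i = i' := h.inj_mul' (by linear_combination e₁ - e₂)
    rw [add_right_cancel e₁]

lemma bitradeCond (h : IsFrame w f D) (hφ : φ.Injective) :
    BitradeCond (triangleSet φ w f D) (triangleSet φ (fun i => w (-i)) (1 - f) D) := by
  have hP := h.reverse.isPLS hφ
  rintro _ ⟨t, ht, i, rfl⟩
  refine ⟨?_, ?_, ?_⟩
  · refine ⟨(φ t, φ (t + w i), φ (t + w i * (1 - f))), ⟨⟨t, ht, -i, by simp⟩, rfl, rfl⟩, ?_⟩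
    rintro q ⟨hq, e₁, e₂⟩
    exact (hP _ hq _ ⟨t, ht, -i, by simp⟩).1 ⟨e₁, e₂⟩
  · have e : t + w i * f = t + w (i + 1) * (1 - f) := by
      rw [h.add]
      linear_combination w i * h.frac
    have hm : (φ t, φ (t + w (i + 1)), φ (t + w i * f)) ∈
        triangleSet φ (fun i => w (-i)) (1 - f) D :=
      ⟨t, ht, -(i + 1), by rw [e]; simp only [neg_neg]⟩
    refine ⟨_, ⟨hm, rfl, rfl⟩, ?_⟩
    rintro q ⟨hq, e₁, e₂⟩
    exact (hP _ hq _ hm).2.1 ⟨e₁, e₂⟩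
  · have e : t + w i * f = t + (w i - w (i + -1)) + w (i + -1) * (1 - f) := by
      rw [h.add]
      linear_combination w i * w (-1) * h.frac + w i * (1 - f) * h.inv
    have hm : (φ (t + (w i - w (i + -1))), φ (t + w i), φ (t + w i * f)) ∈
        triangleSet φ (fun i => w (-i)) (1 - f) D :=
      ⟨t + (w i - w (i + -1)), D.add_mem ht (h.sub_mem _ _), -(i + -1), by
        rw [e]; simp only [neg_neg]; congr 3; ring⟩
    refine ⟨_, ⟨hm, rfl, rfl⟩, ?_⟩
    rintro q ⟨hq, e₁, e₂⟩
    exact (hP _ hq _ hm).2.2 ⟨e₁, e₂⟩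

lemma isBitrade (h : IsFrame w f D) (hφ : φ.Injective) (h1 : (1 : ZMod k) ≠ 0) :
    IsBitrade (triangleSet φ w f D) (triangleSet φ (fun i => w (-i)) (1 - f) D) := by
  refine ⟨⟨_, 0, D.zero_mem, 0, rfl⟩, ⟨_, 0, D.zero_mem, 0, rfl⟩, h.isPLS hφ, h.reverse.isPLS hφ,
    ?_, h.bitradeCond hφ, ?_⟩
  · rw [Set.disjoint_left]
    rintro _ ⟨t, -, i, rfl⟩ ⟨t', -, i', e⟩
    simp only [Prod.mk.injEq] at e
    obtain ⟨e₁, e₂, e₃⟩ := e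
    obtain rfl := hφ e₁
    have e₂ := add_left_cancel (hφ e₂)
    have e₃ := add_left_cancel (hφ e₃)
    rw [← e₂] at e₃
    -- `w i * f = w i * (1 - f)` clears to `w (i + 1) = w i`.
    have e₄ : w (i + 1) = w i := by
      rw [h.add]
      linear_combination (1 + w 1) * e₃ - 2 * w i * h.frac
    exact h1 (by simpa using h.inj e₄)
  · simpa using h.reverse.bitradeCond hφ

lemma isHomogeneous [NeZero k] (h : IsFrame w f D) (hφ : φ.Injective) :
    IsHomogeneous (triangleSet φ w f D) k := by
  have key : ∀ (S : Set (ℕ × ℕ × ℕ)) (F : ZMod k → ℕ × ℕ × ℕ), F.Injective →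
      S = Set.range F → S.ncard = k := by
    rintro S F hF rfl
    rw [← Set.image_univ, Set.ncard_image_of_injective _ hF, Set.ncard_univ, Nat.card_zmod]
  refine ⟨?_, ?_, ?_⟩
  · rintro _ ⟨_, ⟨t, ht, j, rfl⟩, rfl⟩
    refine key _ (fun i => (φ t, φ (t + w i), φ (t + w i * f))) ?_ ?_
    · intro i i' e
      simp only [Prod.mk.injEq] at e
      exact h.inj (add_left_cancel (hφ e.2.1))
    · ext p
      constructor
      · rintro ⟨⟨t', ht', i, rfl⟩, e⟩
        obtain rfl := hφ e
        exact ⟨i, rfl⟩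
      · rintro ⟨i, rfl⟩
        exact ⟨⟨t, ht, i, rfl⟩, rfl⟩
  · rintro _ ⟨_, ⟨t, ht, j, rfl⟩, rfl⟩
    refine key _ (fun i => (φ (t + (w j - w i)), φ (t + w j),
      φ (t + (w j - w i) + w i * f))) ?_ ?_
    · intro i i' e
      simp only [Prod.mk.injEq] at e
      exact h.inj (sub_right_injective (add_left_cancel (hφ e.1)))
    · ext p
      constructor
      · rintro ⟨⟨t', ht', i, rfl⟩, e⟩
        have e := hφ e
        obtain rfl : t' = t + (w j - w i) := by linear_combination e
        exact ⟨i, by simp only [← e]⟩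
      · rintro ⟨i, rfl⟩
        refine ⟨⟨_, D.add_mem ht (h.sub_mem j i), i, ?_⟩, rfl⟩
        rw [show t + (w j - w i) + w i = t + w j by ring]
  · rintro _ ⟨_, ⟨t, ht, j, rfl⟩, rfl⟩
    refine key _ (fun i => (φ (t + (w j - w i) * f), φ (t + (w j - w i) * f + w i),
      φ (t + w j * f))) ?_ ?_
    · intro i i' e
      simp only [Prod.mk.injEq] at e
      exact h.inj_mul (by linear_combination - add_left_cancel (hφ e.1))
    · ext p
      constructor
      · rintro ⟨⟨t', ht', i, rfl⟩, e⟩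
        have e := hφ e
        obtain rfl : t' = t + (w j - w i) * f := by linear_combination e
        exact ⟨i, by simp only [← e]⟩
      · rintro ⟨i, rfl⟩
        refine ⟨⟨_, D.add_mem ht (D.mul_mem_right f (h.sub_mem j i)), i, ?_⟩, rfl⟩
        rw [show t + (w j - w i) * f + w i * f = t + w j * f by ring]

/-- The two moves that any trade inside `triangleSet φ w f D` is closed under, in terms of the
parameters `(t, i)` of a triple: `i` may be lowered by `1`, and `t` may be translated by
`w i - w (i + 1)` at the cost of changing `i`. -/
lemma step (h : IsFrame w f D) (hφ : φ.Injective) {U U' : Set (ℕ × ℕ × ℕ)}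
    (hU : IsBitrade U U') (hsub : U ⊆ triangleSet φ w f D) {t : R} {i : ZMod k}
    (hm : (φ t, φ (t + w i), φ (t + w i * f)) ∈ U) :
    (φ t, φ (t + w (i - 1)), φ (t + w (i - 1) * f)) ∈ U ∧
    ∃ t' j, t' = t + (w i - w (i + 1)) ∧ (φ t', φ (t' + w j), φ (t' + w j * f)) ∈ U := by
  obtain ⟨-, -, -, -, hdis, hc, hc'⟩ := hU
  obtain ⟨⟨r, c, s⟩, ⟨hq, e₁, e₂⟩, -⟩ := (hc _ hm).1
  dsimp only at e₁ e₂
  subst e₁ e₂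
  -- The elements of `U` sharing the row and symbol, or the column and symbol, of the `U'` triple.
  obtain ⟨q₁, ⟨hq₁, e₁, e₂⟩, -⟩ := (hc' _ hq).2.1
  obtain ⟨q₂, ⟨hq₂, e₃, e₄⟩, -⟩ := (hc' _ hq).2.2
  obtain ⟨t₁, -, i₁, rfl⟩ := hsub hq₁
  obtain ⟨t₂, -, i₂, rfl⟩ := hsub hq₂
  dsimp only at e₁ e₂ e₃ e₄
  obtain rfl := hφ e₁
  have e₃ := hφ e₃
  have e₅ := hφ (e₂.trans e₄.symm)
  have key : w i + w (i + 1) = w i₂ + w (i₁ + 1) := by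
    rw [h.add, h.add]
    linear_combination (-(1 + w 1)) * e₃ - (1 + w 1) * e₅ + (w i₁ - w i₂) * h.frac
  rcases h.indep _ _ _ _ key with ⟨-, b⟩ | ⟨a, b⟩
  · obtain rfl := add_right_cancel b
    rw [← e₂] at hq
    exact absurd hq (Set.disjoint_left.mp hdis hm)
  · subst a b
    refine ⟨by simpa using hq₁, t₂, _, ?_, hq₂⟩
    linear_combination e₃

lemma isMinimalTrade [NeZero k] (h : IsFrame w f D) (hφ : φ.Injective)
    (hD : D = Ideal.span {1 - w 1}) (three : ∀ r : R, r + r + r = 0)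
    (hspan : ∀ r, r ∈ AddSubgroup.closure (Set.range w)) :
    IsMinimalTrade (triangleSet φ w f D) := by
  intro U U' hU hsub
  refine hsub.antisymm ?_
  have turn : ∀ (t : R) (i j : ZMod k), (φ t, φ (t + w i), φ (t + w i * f)) ∈ U →
      (φ t, φ (t + w j), φ (t + w j * f)) ∈ U := by
    intro t i j hm
    have : ∀ n : ℕ, (φ t, φ (t + w (i - n)), φ (t + w (i - n) * f)) ∈ U := by
      intro n
      induction n with
      | zero => simpa using hm
      | succ n ih => simpa [sub_sub] using (h.step hφ hU hsub ih).1
    simpa using this (i - j).val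
  -- Translations by `r * (1 - w 1)` preserve `U`; inverses come for free since `-r = r + r`.
  have move : ∀ r : R, ∀ t, (∃ i, (φ t, φ (t + w i), φ (t + w i * f)) ∈ U) →
      ∃ t' j, t' = t + r * (1 - w 1) ∧ (φ t', φ (t' + w j), φ (t' + w j * f)) ∈ U := by
    intro r
    induction hspan r using AddSubgroup.closure_induction with
    | mem r hr =>
      obtain ⟨i, rfl⟩ := hr
      rintro t ⟨j, hj⟩
      obtain ⟨t', l, e, hm⟩ := (h.step hφ hU hsub (turn t j i hj)).2
      refine ⟨t', l, ?_, hm⟩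
      rw [e, h.add]
      ring
    | zero =>
      rintro t ⟨j, hj⟩
      exact ⟨t, j, by ring, hj⟩
    | add r s _ _ hr hs =>
      intro t ht
      obtain ⟨t₁, j₁, e₁, h₁⟩ := hr t ht
      obtain ⟨t₂, j₂, e₂, h₂⟩ := hs t₁ ⟨j₁, h₁⟩
      exact ⟨t₂, j₂, by rw [e₂, e₁]; ring, h₂⟩
    | neg r _ hr =>
      intro t ht
      obtain ⟨t₁, j₁, e₁, h₁⟩ := hr t ht
      obtain ⟨t₂, j₂, e₂, h₂⟩ := hr t₁ ⟨j₁, h₁⟩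
      exact ⟨t₂, j₂, by rw [e₂, e₁]; linear_combination (1 - w 1) * three r, h₂⟩
  rintro _ ⟨t, ht, i, rfl⟩
  obtain ⟨p, hp⟩ := hU.1
  obtain ⟨t₀, ht₀, i₀, rfl⟩ := hsub hp
  have hd : t - t₀ ∈ Ideal.span {1 - w 1} := hD ▸ D.sub_mem ht ht₀
  obtain ⟨r, hr⟩ := Ideal.mem_span_singleton'.mp hd
  obtain ⟨t', j, e, hm⟩ := move r t₀ ⟨i₀, hp⟩
  obtain rfl : t' = t := by rw [e, hr]; ring
  exact turn _ _ _ hm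

end IsFrame

/-- The frame in the group ring `𝔽₃[ℤ/k]`. For odd `k` the element `1 + x` has inverse
`-∑_{j < k} (-x)^j`, because `(1 + x) ∑_{j < k} (-x)^j = 1 + x ^ k = 2 = -1`. -/
lemma exists_isFrame (k : ℕ) [NeZero k] (hodd : Odd k) :
    ∃ f, IsFrame (fun i : ZMod k =>
      (AddMonoidAlgebra.single i 1 : AddMonoidAlgebra (ZMod 3) (ZMod k))) f
      (Ideal.span {1 - AddMonoidAlgebra.single 1 1}) := by
  set w : ZMod k → AddMonoidAlgebra (ZMod 3) (ZMod k) := fun i => AddMonoidAlgebra.single i 1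
    with hw
  have hadd : ∀ i j, w (i + j) = w i * w j := fun i j => by
    simp [hw, AddMonoidAlgebra.single_mul_single]
  have hzero : w 0 = 1 := rfl
  have hpow : ∀ n : ℕ, w n = w 1 ^ n := by
    intro n
    induction n with
    | zero => simp [hzero]
    | succ n ih => rw [pow_succ, ← ih, ← hadd, Nat.cast_succ]
  have three : (3 : AddMonoidAlgebra (ZMod 3) (ZMod k)) = 0 := by
    have : ((3 : ℕ) : ZMod 3) = 0 := by decide
    have h := congrArg (algebraMap (ZMod 3) (AddMonoidAlgebra (ZMod 3) (ZMod k))) this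
    rwa [map_natCast, map_zero] at h
  refine ⟨-w 1 * ∑ j ∈ Finset.range k, (-w 1) ^ j, hadd, hzero, ?_, ?_, ?_⟩
  · have hk : w 1 ^ k = 1 := by rw [← hpow, ZMod.natCast_self, hzero]
    have hg := mul_neg_geom_sum (-w 1) k
    rw [hodd.neg_pow, hk] at hg
    change (1 + w 1) * _ = w 1
    linear_combination (-w 1) * hg - w 1 * three
  · intro a b c d e
    have e' : Finsupp.single a (1 : ZMod 3) + Finsupp.single b 1 =
        Finsupp.single c 1 + Finsupp.single d 1 := congrArg AddMonoidAlgebra.coeff e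
    rw [Finsupp.single_add_single_eq_single_add_single one_ne_zero one_ne_zero] at e'
    rcases e' with h | h | h
    · exact Or.inl h
    · exact Or.inr h.2
    · exact absurd h.1 (by decide)
  · intro i j
    have h1 : ∀ i, 1 - w i ∈ Ideal.span {1 - w 1} := by
      intro i
      rw [Ideal.mem_span_singleton, ← ZMod.natCast_zmod_val i, hpow]
      exact one_sub_dvd_one_sub_pow _ _
    have := Ideal.sub_mem _ (h1 j) (h1 i)
    rwa [sub_sub_sub_cancel_left] at this

/-- For every odd `k ≥ 3` there exists a latin bitrade `(T°, T⋆)` with `T°`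
`k`-homogeneous and minimal. -/
theorem statement19 (k : ℕ) (hk : 3 ≤ k) (hodd : Odd k) :
    ∃ T T' : Set (ℕ × ℕ × ℕ), IsBitrade T T' ∧ IsHomogeneous T k ∧ IsMinimalTrade T := by
  have : NeZero k := ⟨by omega⟩
  have : Fact (1 < k) := ⟨by omega⟩
  obtain ⟨f, h⟩ := exists_isFrame k hodd
  have : Finite (AddMonoidAlgebra (ZMod 3) (ZMod k)) :=
    Finite.of_injective _ AddMonoidAlgebra.coeff_injective
  obtain ⟨φ, hφ⟩ := exists_injective_nat (AddMonoidAlgebra (ZMod 3) (ZMod k))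
  refine ⟨_, _, h.isBitrade hφ one_ne_zero, h.isHomogeneous hφ, h.isMinimalTrade hφ rfl ?_ ?_⟩
  · intro r
    have h3 : (3 : ZMod 3) = 0 := by decide
    have : (3 : ZMod 3) • r = 0 := by rw [h3, zero_smul]
    rw [← this]
    module
  · intro r
    induction r using AddMonoidAlgebra.induction_linear with
    | zero => exact AddSubgroup.zero_mem _
    | add r s hr hs => exact AddSubgroup.add_mem _ hr hs
    | single a c =>
      have e : (AddMonoidAlgebra.single a c : AddMonoidAlgebra (ZMod 3) (ZMod k)) =
          c.val • AddMonoidAlgebra.single a 1 := by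
        rw [AddMonoidAlgebra.smul_single, nsmul_one, ZMod.natCast_zmod_val]
      rw [e]
      refine AddSubgroup.nsmul_mem _ (AddSubgroup.subset_closure ?_) _
      exact ⟨a, rfl⟩
end
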